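/- Let n be a positive integer. A subdirectly irreducible modular ortholattice L has dimension at most n if and only if L is n-distributive; consequently, L has dimension exactly n if and only if L is n-distributive but not (n−1)-distributive. -/

import Mathlib

/-- An ortholattice: a bounded lattice with an order-reversing involution `x ↦ x′`
satisfying `x ⊓ x′ = ⊥` and `x ⊔ x′ = ⊤`. -/
class Ortholattice (α : Type*) extends Lattice α, BoundedOrder α where
  compl : α → α
  compl_antitone : ∀ x y : α, x ≤ y → compl y ≤ compl x
  compl_compl : ∀ x : α, compl (compl x) = x
  inf_compl : ∀ x : α, x ⊓ compl x = ⊥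
  sup_compl : ∀ x : α, x ⊔ compl x = ⊤

postfix:max "′" => Ortholattice.compl

/-- A lattice has finite dimension `d` if some maximal chain has exactly `d + 1` elements. -/
def HasDim (α : Type*) [Lattice α] (d : ℕ) : Prop :=
  ∃ s : Set α, IsMaxChain (· ≤ ·) s ∧ s.ncard = d + 1

/-- Huhn's `n`-distributive law:
`x ⊓ ⋁_{i=0}^{n} y i = ⋁_{j=0}^{n} (x ⊓ ⋁_{i ≠ j} y i)`. -/
def NDistributive (α : Type*) [Lattice α] [OrderBot α] (n : ℕ) : Prop :=
  ∀ (x : α) (y : Fin (n + 1) → α),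
    x ⊓ Finset.univ.sup y =
      Finset.univ.sup fun j : Fin (n + 1) => x ⊓ (Finset.univ.erase j).sup y

/-- A congruence of an ortholattice: an equivalence relation compatible with
`⊓`, `⊔` and `′`. -/
def IsOLCongruence (α : Type*) [Ortholattice α] (r : α → α → Prop) : Prop :=
  Equivalence r ∧
  (∀ a b c d : α, r a b → r c d → r (a ⊓ c) (b ⊓ d) ∧ r (a ⊔ c) (b ⊔ d)) ∧
  (∀ a b : α, r a b → r a′ b′)

/-- An ortholattice is subdirectly irreducible if it has a least nontrivial congruence. -/
def SubdirectlyIrreducible (α : Type*) [Ortholattice α] : Prop :=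
  ∃ r : α → α → Prop, IsOLCongruence α r ∧ (∃ a b : α, a ≠ b ∧ r a b) ∧
    ∀ s : α → α → Prop, IsOLCongruence α s → (∃ a b : α, a ≠ b ∧ s a b) →
      ∀ a b : α, r a b → s a b

namespace MOL

set_option linter.unusedSectionVars false

variable {α : Type*} [Ortholattice α] [IsModularLattice α]

/-- modular law in the convenient form -/
theorem md {a b c : α} (h : a ≤ c) : (a ⊔ b) ⊓ c = a ⊔ b ⊓ c := sup_inf_assoc_of_le b h

theorem relc {a b : α} (h : a ≤ b) : a ⊔ b ⊓ a′ = b := by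
  have h1 := md (b := a′) h
  rw [Ortholattice.sup_compl, top_inf_eq] at h1
  rw [inf_comm b]; exact h1.symm

theorem inf_c (a : α) : a ⊓ a′ = ⊥ := Ortholattice.inf_compl a

def T (u v : α) : Prop := ∀ x, (u ⊔ x) ⊓ v ≤ x

def B (u v : α) : Prop := ∀ c, c ≤ u ⊔ v → c ⊓ u = ⊥ → c ⊓ v = ⊥ → c = ⊥

theorem T.disj {u v : α} (h : T u v) : u ⊓ v = ⊥ := by
  have := h ⊥; simpa using this

theorem T.toB {u v : α} (h : T u v) : B u v := by
  intro c hc h1 h2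
  have h3 : (u ⊔ c) ⊓ v = ⊥ := by
    rw [← le_bot_iff, ← h2]; exact le_inf (h c) inf_le_right
  have h4 : c ≤ u := by
    have h5 : (u ⊔ v) ⊓ (u ⊔ c) = u ⊔ v ⊓ (u ⊔ c) := md le_sup_left
    rw [inf_comm v, h3, sup_bot_eq] at h5
    rw [← h5]; exact le_inf hc le_sup_right
  rw [← h1]; exact (inf_eq_left.2 h4).symm

theorem B.toT {u v : α} (h : B u v) (hd : u ⊓ v = ⊥) : T u v := by
  intro x
  set w := (u ⊔ x) ⊓ v with hw
  have hrel : (x ⊓ w) ⊔ w ⊓ (x ⊓ w)′ = w := relc inf_le_right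
  set d := w ⊓ (x ⊓ w)′ with hdd
  have dw : d ≤ w := inf_le_left
  have dx : d ⊓ x = ⊥ := by
    rw [← le_bot_iff, ← inf_c (x ⊓ w)]
    exact le_inf (le_inf inf_le_right (inf_le_left.trans dw)) (inf_le_left.trans inf_le_right)
  have dv : d ≤ v := dw.trans inf_le_right
  have dux : d ≤ u ⊔ x := dw.trans inf_le_left
  set c := (d ⊔ u) ⊓ x with hc
  have cv : c ⊓ v = ⊥ := by
    have h1 : (d ⊔ u) ⊓ v = d := by rw [md dv, hd, sup_bot_eq]
    rw [← le_bot_iff, ← dx, ← h1]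
    exact le_inf (le_inf (inf_le_left.trans inf_le_left) inf_le_right) (inf_le_left.trans inf_le_right)
  have hrel2 : (c ⊓ u) ⊔ c ⊓ (c ⊓ u)′ = c := relc inf_le_left
  have h0 : c ⊓ (c ⊓ u)′ = ⊥ := by
    apply h
    · refine inf_le_left.trans (inf_le_left.trans ?_)
      exact sup_le (dv.trans le_sup_right) le_sup_left
    · rw [← le_bot_iff, ← inf_c (c ⊓ u)]
      exact le_inf (le_inf (inf_le_left.trans inf_le_left) inf_le_right)
        (inf_le_left.trans inf_le_right)
    · rw [← le_bot_iff, ← cv]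
      exact inf_le_inf_right _ inf_le_left
  rw [h0, sup_bot_eq] at hrel2
  have cu : c ≤ u := inf_eq_left.1 hrel2
  have du : d ≤ u := by
    have h5 : (u ⊔ x) ⊓ (d ⊔ u) = u ⊔ x ⊓ (d ⊔ u) := md le_sup_right
    rw [inf_comm x, ← hc, sup_eq_left.2 cu] at h5
    rw [← h5]; exact le_inf dux le_sup_left
  have d0 : d = ⊥ := by
    rw [← le_bot_iff, ← hd]; exact le_inf du dv
  rw [d0, sup_bot_eq] at hrel
  rw [← hrel]; exact inf_le_left

theorem T.symm {u v : α} (h : T u v) : T v u := by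
  apply B.toT
  · intro c hc h1 h2
    exact h.toB c (by rwa [sup_comm]) h2 h1
  · rw [inf_comm]; exact h.disj

theorem T.mono {u u' v : α} (h : T u v) (hu : u' ≤ u) : T u' v :=
  fun x => (inf_le_inf_right v (sup_le_sup_right hu x)).trans (h x)

theorem T.sup {u u' v : α} (h : T u v) (h' : T u' v) : T (u ⊔ u') v := by
  intro x
  have h1 := h (u' ⊔ x)
  rw [← sup_assoc] at h1
  exact (le_inf h1 inf_le_right).trans (h' x)

/-- case of complements -/
theorem T.persp0 {j v t x : α} (h : T j v) (hx : x ⊔ j = ⊤) (hxj : x ⊓ j = ⊥)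
    (htx : t ⊓ x = ⊥) : T t v := by
  have vx : v ≤ x := by
    have := h x; rwa [sup_comm, hx, top_inf_eq] at this
  have tv : t ⊓ v = ⊥ := by
    rw [← le_bot_iff, ← htx]; exact inf_le_inf_left _ vx
  refine B.toT ?_ tv
  intro c hc ct cv
  have cx : c ⊓ x = ⊥ := by
    have h1 : (v ⊔ t) ⊓ x = v := by rw [md vx, htx, sup_bot_eq]
    rw [← le_bot_iff, ← cv]
    refine le_inf inf_le_left ?_
    rw [← h1, sup_comm]; exact inf_le_inf_right _ hc
  set x1 := (t ⊔ j) ⊓ x with hx1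
  have tjv : (t ⊔ j) ⊓ v = ⊥ := by
    rw [← le_bot_iff, ← tv]
    have := h t
    rw [sup_comm] at this
    exact le_inf this inf_le_right
  have x1x : x1 ≤ x := inf_le_right
  have x1tj : x1 ≤ t ⊔ j := inf_le_left
  have p0 : (x1 ⊔ c) ⊓ (j ⊔ v) = ⊥ := by
    apply h.toB
    · exact inf_le_right
    · have h1 : c ⊓ (t ⊔ j) = ⊥ := by
        rw [← le_bot_iff, ← ct]
        refine le_inf inf_le_left ?_
        have h2 : (t ⊔ v) ⊓ (t ⊔ j) = t := by
          rw [md le_sup_left, inf_comm, tjv, sup_bot_eq]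
        calc c ⊓ (t ⊔ j) ≤ (t ⊔ v) ⊓ (t ⊔ j) := inf_le_inf_right _ hc
          _ = t := h2
      have h3 : (x1 ⊔ c) ⊓ (t ⊔ j) = x1 := by rw [md x1tj, h1, sup_bot_eq]
      rw [← le_bot_iff, ← hxj]
      refine le_inf (le_trans ?_ x1x) inf_le_right
      calc (x1 ⊔ c) ⊓ (j ⊔ v) ⊓ j ≤ (x1 ⊔ c) ⊓ (t ⊔ j) :=
            le_inf (inf_le_left.trans inf_le_left) (inf_le_right.trans le_sup_right)
        _ = x1 := h3
    · rw [← le_bot_iff, ← tjv]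
      refine le_inf (le_trans ?_ x1tj) inf_le_right
      have h3 : (x1 ⊔ c) ⊓ x = x1 := by rw [md x1x, cx, sup_bot_eq]
      calc (x1 ⊔ c) ⊓ (j ⊔ v) ⊓ v ≤ (x1 ⊔ c) ⊓ x :=
            le_inf (inf_le_left.trans inf_le_left) (inf_le_right.trans vx)
        _ = x1 := h3
  have tx1 : t ≤ j ⊔ x1 := by
    have h1 : (j ⊔ x) ⊓ (t ⊔ j) = j ⊔ x ⊓ (t ⊔ j) := md le_sup_right
    rw [sup_comm j x, hx, top_inf_eq, inf_comm, ← hx1] at h1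
    rw [← h1]; exact le_sup_left
  have c1 : c ≤ x1 ⊔ (j ⊔ v) := by
    refine hc.trans (sup_le (tx1.trans ?_) ?_)
    · exact sup_le (le_sup_left.trans le_sup_right) le_sup_left
    · exact le_sup_right.trans le_sup_right
  have c2 : c ≤ x1 := by
    have h1 : (x1 ⊔ (j ⊔ v)) ⊓ (x1 ⊔ c) = x1 ⊔ (j ⊔ v) ⊓ (x1 ⊔ c) := md le_sup_left
    rw [inf_comm (j ⊔ v), p0, sup_bot_eq] at h1
    rw [← h1]; exact le_inf c1 le_sup_right
  rw [← cx]; exact (inf_eq_left.2 (c2.trans x1x)).symm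

theorem T.persp {j v t x : α} (h : T j v) (ht : t ≤ x ⊔ j) (htx : t ⊓ x = ⊥) : T t v := by
  have hy : (x ⊔ (x ⊔ j)′) ⊓ (x ⊔ j) = x := by
    rw [md le_sup_left, inf_comm, inf_c, sup_bot_eq]
  set y := x ⊔ (x ⊔ j)′ with hyd
  have hty : t ⊓ y = ⊥ := by
    rw [← le_bot_iff, ← htx]
    refine le_inf inf_le_left ?_
    calc t ⊓ y ≤ y ⊓ (x ⊔ j) := le_inf inf_le_right (inf_le_left.trans ht)
      _ = x := hy
  have hyj : y ⊔ j = ⊤ := by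
    rw [← top_le_iff, ← Ortholattice.sup_compl (x ⊔ j)]
    refine sup_le (sup_le_sup_right le_sup_left _) (le_sup_right.trans le_sup_left)
  have hr : (y ⊓ j) ⊔ j ⊓ (y ⊓ j)′ = j := relc inf_le_right
  refine (h.mono (u' := j ⊓ (y ⊓ j)′) inf_le_left).persp0 (x := y) ?_ ?_ hty
  · rw [← top_le_iff, ← hyj]
    refine sup_le le_sup_left ?_
    calc j = (y ⊓ j) ⊔ j ⊓ (y ⊓ j)′ := hr.symm
      _ ≤ _ := sup_le_sup_right inf_le_left _
  · rw [← inf_assoc, inf_c]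

def J (V : Set α) (u : α) : Prop := ∀ v ∈ V, T u v

def Th (V : Set α) (x y : α) : Prop := ∃ j, J V j ∧ x ⊔ j = y ⊔ j

theorem J.sup {V : Set α} {a b : α} (ha : J V a) (hb : J V b) : J V (a ⊔ b) :=
  fun v hv => (ha v hv).sup (hb v hv)

theorem J.persp {V : Set α} {j t x : α} (h : J V j) (ht : t ≤ x ⊔ j) (htx : t ⊓ x = ⊥) :
    J V t := fun v hv => (h v hv).persp ht htx

theorem J.bot (V : Set α) : J V ⊥ := fun v _ x => by simp

theorem Th.equiv (V : Set α) : Equivalence (Th V) where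
  refl x := ⟨⊥, J.bot V, rfl⟩
  symm := fun ⟨j, hj, h⟩ => ⟨j, hj, h.symm⟩
  trans := by
    rintro x y z ⟨j, hj, h⟩ ⟨k, hk, h'⟩
    refine ⟨j ⊔ k, hj.sup hk, ?_⟩
    rw [← sup_assoc, h, sup_assoc, sup_comm j k, ← sup_assoc, h', sup_assoc]

theorem Th.inf1 {V : Set α} {x j : α} (z : α) (hj : J V j) : Th V (x ⊓ z) ((x ⊔ j) ⊓ z) := by
  have hle : x ⊓ z ≤ (x ⊔ j) ⊓ z := inf_le_inf_right _ le_sup_left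
  refine ⟨((x ⊔ j) ⊓ z) ⊓ (x ⊓ z)′, hj.persp (x := x) (inf_le_left.trans inf_le_left) ?_, ?_⟩
  · rw [← le_bot_iff, ← inf_c (x ⊓ z)]
    exact le_inf (le_inf inf_le_right (inf_le_left.trans (inf_le_left.trans inf_le_right)))
      (inf_le_left.trans inf_le_right)
  · rw [relc hle]; exact (sup_eq_left.2 inf_le_left).symm

theorem Th.inf {V : Set α} {x y : α} (z : α) (h : Th V x y) : Th V (x ⊓ z) (y ⊓ z) := by
  obtain ⟨j, hj, h⟩ := h
  have h1 := Th.inf1 (x := x) z hj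
  have h2 := Th.inf1 (x := y) z hj
  rw [h] at h1
  exact (Th.equiv V).trans h1 ((Th.equiv V).symm h2)

theorem Th.compl1 {V : Set α} {x j : α} (hj : J V j) : Th V ((x ⊔ j)′) (x′) := by
  have hle : (x ⊔ j)′ ≤ x′ := Ortholattice.compl_antitone _ _ le_sup_left
  have hr := relc hle
  rw [Ortholattice.compl_compl] at hr
  refine ⟨x′ ⊓ (x ⊔ j), hj.persp (x := x) inf_le_right ?_, ?_⟩
  · rw [← le_bot_iff, ← inf_c x]
    exact le_inf inf_le_right (inf_le_left.trans inf_le_left)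
  · rw [hr, sup_eq_left.2 inf_le_left]

theorem Th.cong (V : Set α) : IsOLCongruence α (Th V) := by
  refine ⟨Th.equiv V, ?_, ?_⟩
  · intro a b c d h h'
    constructor
    · have h1 := h.inf c
      have h2 := h'.inf b
      rw [inf_comm c, inf_comm d] at h2
      exact (Th.equiv V).trans h1 h2
    · obtain ⟨j, hj, h⟩ := h
      obtain ⟨k, hk, h'⟩ := h'
      refine ⟨j ⊔ k, hj.sup hk, ?_⟩
      rw [sup_sup_sup_comm, h, h', sup_sup_sup_comm]
  · rintro a b ⟨j, hj, h⟩
    have h1 := Th.compl1 (x := a) hj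
    have h2 := Th.compl1 (x := b) hj
    rw [h] at h1
    exact (Th.equiv V).trans ((Th.equiv V).symm h1) h2

theorem Th.of_bot {V : Set α} {x : α} (h : Th V x ⊥) : J V x := by
  obtain ⟨j, hj, h⟩ := h
  rw [bot_sup_eq] at h
  exact fun v hv => (hj v hv).mono (sup_eq_right.1 h)

theorem key (hsi : SubdirectlyIrreducible α) {u v : α} (hu : u ≠ ⊥) (hv : v ≠ ⊥)
    (hd : u ⊓ v = ⊥) : ∃ c, c ≠ ⊥ ∧ c ≤ u ⊔ v ∧ c ⊓ u = ⊥ ∧ c ⊓ v = ⊥ := by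
  by_contra hno
  have hB : B u v := by
    intro c h1 h2 h3
    by_contra h4
    exact hno ⟨c, h4, h1, h2, h3⟩
  have hT : T u v := hB.toT hd
  obtain ⟨r, ⟨hre, hrl, hrc⟩, ⟨a, b, hab, rab⟩, hmin⟩ := hsi
  have r1 : r (a ⊔ b) b := by simpa using (hrl a b b b rab (hre.refl b)).2
  have r2 : r (a ⊓ b) b := by simpa using (hrl a b b b rab (hre.refl b)).1
  have r3 : r (a ⊔ b) (a ⊓ b) := hre.trans r1 (hre.symm r2)
  have r4 := (hrl _ _ _ _ r3 (hre.refl (a ⊓ b)′)).1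
  rw [inf_c] at r4
  have hle : a ⊓ b ≤ a ⊔ b := inf_le_left.trans le_sup_left
  set w := (a ⊔ b) ⊓ (a ⊓ b)′ with hw
  have hw0 : w ≠ ⊥ := by
    intro h0
    have := relc hle
    rw [← hw, h0, sup_bot_eq] at this
    apply hab
    exact le_antisymm (le_sup_left.trans (this ▸ inf_le_right))
      (le_sup_right.trans (this ▸ inf_le_left))
  have hju : J {v} u := by
    intro x hx
    rw [Set.mem_singleton_iff] at hx
    subst hx; exact hT
  have hjv : J {x | J {v} x} v := fun x hx => T.symm (hx v rfl)
  have n1 := hmin (Th {v}) (Th.cong _) ⟨u, ⊥, hu, u, hju, by simp⟩ _ _ r4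
  have n2 := hmin (Th {x | J {v} x}) (Th.cong _) ⟨v, ⊥, hv, v, hjv, by simp⟩ _ _ r4
  have := n2.of_bot w n1.of_bot
  apply hw0
  have := this.disj
  simpa using this

theorem diamond (hsi : SubdirectlyIrreducible α) (f : ℕ → α) (k : ℕ)
    (hf : ∀ i < k + 1, f i < f (i + 1)) :
    ∃ x, x ≠ ⊥ ∧ x ≤ (Finset.range (k + 1)).sup (fun i => f (i + 1) ⊓ (f i)′) ∧
      ∀ j < k + 1, x ⊓ ((Finset.range (k + 1)).erase j).sup (fun i => f (i + 1) ⊓ (f i)′) = ⊥ := by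
  set a : ℕ → α := fun i => f (i + 1) ⊓ (f i)′ with ha
  have ane : ∀ i < k + 1, a i ≠ ⊥ := by
    intro i hi h0
    have := relc (hf i hi).le
    change f i ⊔ a i = _ at this
    rw [h0, sup_bot_eq] at this
    exact (hf i hi).ne this
  induction k with
  | zero =>
    refine ⟨a 0, ane 0 (by omega), by simp, ?_⟩
    intro j hj
    obtain rfl : j = 0 := by omega
    simp
  | succ k ih =>
    obtain ⟨x, x0, xS, xj⟩ := ih (fun i hi => hf i (by omega)) (fun i hi => ane i (by omega))
    set S := (Finset.range (k + 1)).sup a with hS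
    have hmono : ∀ i m, i ≤ m → m ≤ k + 1 → f i ≤ f m := by
      intro i m him
      induction m, him using Nat.le_induction with
      | base => intro _; exact le_rfl
      | succ m _ ih2 => intro h; exact (ih2 (by omega)).trans (hf m (by omega)).le
    have hSf : S ≤ f (k + 1) := by
      refine Finset.sup_le fun i hi => ?_
      rw [Finset.mem_range] at hi
      exact inf_le_left.trans (hmono _ _ (by omega) le_rfl)
    set a' := a (k + 1) with ha'
    have hSa : a' ⊓ S = ⊥ := by
      rw [← le_bot_iff, ← inf_c (f (k + 1))]
      exact le_inf (inf_le_right.trans hSf) (inf_le_left.trans inf_le_right)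
    have hxa : x ⊓ a' = ⊥ := by
      rw [← le_bot_iff, ← hSa, inf_comm x]; exact inf_le_inf_left _ xS
    obtain ⟨c, c0, cle, cx, ca⟩ := key hsi x0 (ane (k + 1) (by omega)) hxa
    refine ⟨c, c0, ?_, ?_⟩
    · rw [Finset.range_add_one, Finset.sup_insert, sup_comm]
      exact cle.trans (sup_le_sup_right xS _)
    · intro j hj
      rw [Finset.range_add_one]
      rcases Nat.lt_or_ge j (k + 1) with hlt | hge
      · rw [Finset.erase_insert_of_ne (by omega), Finset.sup_insert]
        set Sj := ((Finset.range (k + 1)).erase j).sup a with hSj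
        have hSjS : Sj ≤ S := Finset.sup_mono (Finset.erase_subset _ _)
        have h1 : x ⊓ (a' ⊔ Sj) = ⊥ := by
          rw [← le_bot_iff, ← xj j hlt]
          refine le_inf inf_le_left ?_
          have h2 : (Sj ⊔ a') ⊓ S = Sj := by rw [md hSjS, hSa, sup_bot_eq]
          calc x ⊓ (a' ⊔ Sj) ≤ (Sj ⊔ a') ⊓ S := by
                rw [sup_comm, inf_comm]; exact inf_le_inf_left _ xS
            _ = Sj := h2
        have h2 : (a' ⊔ x) ⊓ (a' ⊔ Sj) = a' := by rw [md le_sup_left, h1, sup_bot_eq]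
        rw [← le_bot_iff, ← ca]
        refine le_inf inf_le_left ?_
        calc c ⊓ (a' ⊔ Sj) ≤ (a' ⊔ x) ⊓ (a' ⊔ Sj) := by
              rw [sup_comm a' x]; exact inf_le_inf_right _ cle
          _ = a' := h2
      · obtain rfl : j = k + 1 := by omega
        rw [Finset.erase_insert (by simp)]
        have h2 : (x ⊔ a') ⊓ S = x := by rw [md xS, hSa, sup_bot_eq]
        rw [← le_bot_iff, ← cx]
        refine le_inf inf_le_left ?_
        calc c ⊓ S ≤ (x ⊔ a') ⊓ S := inf_le_inf_right _ cle
          _ = x := h2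

theorem no_chain (hsi : SubdirectlyIrreducible α) (n : ℕ) (h : NDistributive α n) (f : ℕ → α)
    (hf : ∀ i < n + 1, f i < f (i + 1)) : False := by
  obtain ⟨x, x0, xS, xj⟩ := diamond hsi f n hf
  set a : ℕ → α := fun i => f (i + 1) ⊓ (f i)′ with ha
  have h1 := h x (fun i => a i)
  apply x0
  have h2 : x ≤ Finset.univ.sup (fun i : Fin (n + 1) => a i) := by
    refine xS.trans (Finset.sup_le fun i hi => ?_)
    rw [Finset.mem_range] at hi
    exact Finset.le_sup (f := fun i : Fin (n + 1) => a i) (Finset.mem_univ ⟨i, hi⟩)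
  rw [inf_eq_left.2 h2] at h1
  rw [h1, ← le_bot_iff]
  refine Finset.sup_le fun j _ => ?_
  rw [← xj j j.2]
  refine inf_le_inf_left _ (Finset.sup_le fun i hi => ?_)
  refine Finset.le_sup (f := a) ?_
  rw [Finset.mem_erase] at hi ⊢
  exact ⟨fun h => hi.1 (Fin.ext h), Finset.mem_range.2 i.2⟩

theorem enum (k : ℕ) : ∀ t : Finset α, IsChain (· ≤ ·) (t : Set α) → t.card = k + 1 →
    ∃ f : ℕ → α, (∀ i < k, f i < f (i + 1)) ∧ f k ∈ t ∧ ∀ e ∈ t, e ≤ f k := by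
  classical
  induction k with
  | zero =>
    intro t _ ht
    obtain ⟨a, rfl⟩ := Finset.card_eq_one.1 ht
    exact ⟨fun _ => a, by simp, by simp, by simp⟩
  | succ k ih =>
    intro t hc ht
    obtain ⟨m, hm⟩ := t.exists_maximal (Finset.card_pos.1 (by omega))
    obtain ⟨f, h1, h2, h3⟩ := ih (t.erase m)
      (hc.mono (fun x hx => Finset.mem_of_mem_erase hx)) (by rw [Finset.card_erase_of_mem hm.1]; omega)
    have hle : ∀ e ∈ t, e ≤ m := by
      intro e he
      rcases hc.total he hm.1 with h | h
      · exact h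
      · exact hm.2 he h
    refine ⟨fun i => if i ≤ k then f i else m, ?_, by simpa using hm.1, by simpa using hle⟩
    intro i hi
    rcases Nat.lt_or_ge i k with h | h
    · simpa [h.le, Nat.succ_le_of_lt h] using h1 i h
    · obtain rfl : i = k := by omega
      rw [Finset.mem_erase] at h2
      simpa using lt_of_le_of_ne (hle _ h2.2) h2.1

theorem dim_of_dist (hsi : SubdirectlyIrreducible α) (n : ℕ) (h : NDistributive α n) :
    ∃ d ≤ n, HasDim α d := by
  classical
  have hs : IsMaxChain (· ≤ ·) (maxChain (α := α) (· ≤ ·)) := maxChain_spec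
  set s := maxChain (α := α) (· ≤ ·)
  have hno : ∀ t : Finset α, (t : Set α) ⊆ s → t.card ≠ n + 2 := by
    intro t ht hcard
    obtain ⟨f, hf, _⟩ := enum (n + 1) t (hs.1.mono ht) hcard
    exact no_chain hsi n h f hf
  have hfin : s.Finite := by
    by_contra hinf
    obtain ⟨t, ht, hc⟩ := Set.Infinite.exists_subset_card_eq hinf (n + 2)
    exact hno t ht hc
  have hbot : (⊥ : α) ∈ s := hs.bot_mem
  have hpos : 0 < s.ncard := (Set.ncard_pos hfin).2 ⟨_, hbot⟩
  have hle : s.ncard ≤ n + 1 := by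
    by_contra hgt
    rw [Set.ncard_eq_toFinset_card s hfin] at hgt
    obtain ⟨t, ht, hc⟩ := Finset.exists_subset_card_eq (s := hfin.toFinset) (n := n + 2) (by omega)
    exact hno t (fun x hx => hfin.mem_toFinset.1 (ht hx)) hc
  exact ⟨s.ncard - 1, by omega, s, hs, by omega⟩

theorem rank_exists (d : ℕ) (h : HasDim α d) : ∃ g : α → ℕ, StrictMono g ∧ ∀ x, g x ≤ d := by
  classical
  obtain ⟨s, hs, hcard⟩ := h
  have hfin : s.Finite := Set.finite_of_ncard_pos (by omega)
  have hbot : (⊥ : α) ∈ s := hs.bot_mem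
  have htop : (⊤ : α) ∈ s := hs.top_mem
  let G : α → Finset α := fun b => hfin.toFinset.filter fun c => ∃ p ∈ s, p < c ∧ c ≤ (b ⊓ c) ⊔ p
  have Gm : ∀ b c, c ∈ G b ↔ c ∈ s ∧ ∃ p ∈ s, p < c ∧ c ≤ (b ⊓ c) ⊔ p := by
    intro b c; simp [G]
  refine ⟨fun b => (G b).card, ?_, ?_⟩
  · intro b b' hbb
    have hsub : G b ⊆ G b' := by
      intro c hc
      rw [Gm] at hc ⊢
      obtain ⟨h1, p, hp, h2, h3⟩ := hc
      exact ⟨h1, p, hp, h2, h3.trans (sup_le_sup_right (inf_le_inf_right _ hbb.le) _)⟩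
    refine Finset.card_lt_card (hsub.ssubset_of_ne fun heq => ?_)
    have hall : ∀ c ∈ s, b' ⊓ c ≤ b ⊓ c := by
      intro c hc
      refine hfin.wellFoundedOn (r := (· < ·)) |>.induction hc (P := fun c => b' ⊓ c ≤ b ⊓ c) ?_
      intro c hc ih
      by_cases hG : c ∈ G b
      · obtain ⟨_, p, hp, h2, h3⟩ := (Gm b c).1 hG
        have h4 : ((b ⊓ c) ⊔ p) ⊓ (b' ⊓ c) = (b ⊓ c) ⊔ p ⊓ (b' ⊓ c) :=
          md (inf_le_inf_right _ hbb.le)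
        have h5 : b' ⊓ c ≤ (b ⊓ c) ⊔ p ⊓ (b' ⊓ c) := by
          rw [← h4]; exact le_inf (inf_le_right.trans h3) le_rfl
        refine h5.trans (sup_le le_rfl ?_)
        calc p ⊓ (b' ⊓ c) ≤ b' ⊓ p := le_inf (inf_le_right.trans inf_le_left) inf_le_left
          _ ≤ b ⊓ p := ih p hp h2
          _ ≤ b ⊓ c := inf_le_inf_left _ h2.le
      · have hG' : c ∉ G b' := heq ▸ hG
        by_cases hc0 : c = ⊥
        · subst hc0; simp
        obtain ⟨p, hp⟩ := (hfin.toFinset.filter (· < c)).exists_maximal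
          ⟨⊥, by simp [hbot, bot_lt_iff_ne_bot, hc0]⟩
        have hps : p ∈ s ∧ p < c := by simpa using hp.1
        have hpm : ∀ e ∈ s, e < c → e ≤ p := by
          intro e he hec
          rcases hs.1.total he hps.1 with h | h
          · exact h
          · exact hp.2 (by simp [he, hec]) h
        have hq1 : ¬ c ≤ (b' ⊓ c) ⊔ p := fun h => hG' ((Gm _ _).2 ⟨hc, p, hps.1, hps.2, h⟩)
        have hq2 : (b' ⊓ c) ⊔ p ≤ c := sup_le inf_le_right hps.2.le
        have hq3 : (b' ⊓ c) ⊔ p < c := lt_of_le_not_ge hq2 hq1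
        have hqs : (b' ⊓ c) ⊔ p ∈ s := by
          have hch : IsChain (· ≤ ·) (insert ((b' ⊓ c) ⊔ p) s) := by
            refine hs.1.insert fun e he _ => ?_
            rcases hs.1.total he hc with h | h
            · rcases h.eq_or_lt with h | h
              · left; rw [h]; exact hq2
              · right; exact (hpm e he h).trans le_sup_right
            · left; exact hq2.trans h
          rw [hs.2 hch (Set.subset_insert _ _)]
          exact Set.mem_insert _ _
        have hle : b' ⊓ c ≤ p := le_sup_left.trans (hpm _ hqs hq3)
        calc b' ⊓ c ≤ b' ⊓ p := le_inf inf_le_left hle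
          _ ≤ b ⊓ p := ih p hps.1 hps.2
          _ ≤ b ⊓ c := inf_le_inf_left _ hps.2.le
    have := hall ⊤ htop
    rw [inf_top_eq, inf_top_eq] at this
    exact hbb.not_ge this
  · intro b
    have h1 : G b ⊆ hfin.toFinset.erase ⊥ := by
      intro c hc
      obtain ⟨h1, p, _, h2, _⟩ := (Gm b c).1 hc
      rw [Finset.mem_erase]
      exact ⟨fun h => not_lt_bot (h ▸ h2), hfin.mem_toFinset.2 h1⟩
    have h2 := Finset.card_le_card h1
    rw [Finset.card_erase_of_mem (hfin.mem_toFinset.2 hbot),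
      ← Set.ncard_eq_toFinset_card s hfin] at h2
    change (G b).card ≤ d
    omega

theorem dist_of_dim (n d : ℕ) (hd : d ≤ n) (h : HasDim α d) : NDistributive α n := by
  classical
  obtain ⟨g, hg, hgd⟩ := rank_exists d h
  intro x y
  apply le_antisymm
  · by_cases hex : ∃ j, y j ≤ (Finset.univ.erase j).sup y
    · obtain ⟨j, hj⟩ := hex
      refine le_trans (inf_le_inf_left x ?_) (Finset.le_sup
        (f := fun j : Fin (n + 1) => x ⊓ (Finset.univ.erase j).sup y) (Finset.mem_univ j))
      refine Finset.sup_le fun i _ => ?_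
      by_cases hij : i = j
      · rw [hij]; exact hj
      · exact Finset.le_sup (Finset.mem_erase.2 ⟨hij, Finset.mem_univ _⟩)
    · exfalso
      have hall : ∀ t : Finset (Fin (n + 1)), t.card ≤ g (t.sup y) := by
        intro t
        induction t using Finset.induction with
        | empty => simp
        | insert a t hat ih =>
          rw [Finset.card_insert_of_notMem hat]
          refine lt_of_le_of_lt ih (hg ?_)
          rw [Finset.sup_insert]
          refine right_lt_sup.2 fun hle => hex ⟨a, hle.trans (Finset.sup_mono ?_)⟩
          intro i hi
          exact Finset.mem_erase.2 ⟨fun h => hat (h ▸ hi), Finset.mem_univ _⟩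
      have h1 := hall Finset.univ
      have h2 := hgd (Finset.univ.sup y)
      simp at h1
      omega
  · exact Finset.sup_le fun j _ => inf_le_inf_left _ (Finset.sup_mono (Finset.erase_subset _ _))

theorem dim_le {d e : ℕ} (hd : HasDim α d) (he : HasDim α e) : d ≤ e := by
  obtain ⟨g, hg, hge⟩ := rank_exists e he
  obtain ⟨s, hs, hc⟩ := hd
  have hinj : Set.InjOn g s := by
    intro a ha b hb hab
    by_contra hne
    rcases hs.1.total ha hb with h | h
    · exact (hg (lt_of_le_of_ne h hne)).ne hab
    · exact (hg (lt_of_le_of_ne h (Ne.symm hne))).ne hab.symm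
  have h1 : s.ncard ≤ (Set.Iic e).ncard :=
    Set.ncard_le_ncard_of_injOn g (fun a _ => hge a) hinj (Set.finite_Iic e)
  have h2 : (Set.Iic e).ncard = e + 1 := by
    rw [Set.ncard_eq_toFinset_card']; simp
  omega

end MOL

/-- Let `n ≥ 1`.  A subdirectly irreducible modular ortholattice has dimension at most `n`
iff it is `n`-distributive; consequently it has dimension exactly `n` iff it is
`n`-distributive but not `(n-1)`-distributive. -/
theorem stmt12 (α : Type*) [Ortholattice α] [IsModularLattice α] (n : ℕ) (hn : 1 ≤ n)
    (hsi : SubdirectlyIrreducible α) :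
    ((∃ d ≤ n, HasDim α d) ↔ NDistributive α n) ∧
    (HasDim α n ↔ (NDistributive α n ∧ ¬ NDistributive α (n - 1))) := by
  have main : ∀ m, (∃ d ≤ m, HasDim α d) ↔ NDistributive α m := fun m =>
    ⟨fun ⟨d, hd, h⟩ => MOL.dist_of_dim m d hd h, MOL.dim_of_dist hsi m⟩
  refine ⟨main n, fun h => ⟨(main n).1 ⟨n, le_rfl, h⟩, fun h' => ?_⟩, fun ⟨h, h'⟩ => ?_⟩
  · obtain ⟨d, hd, h2⟩ := (main _).2 h'
    have := MOL.dim_le h h2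
    omega
  · obtain ⟨d, hd, h2⟩ := (main _).2 h
    rcases Nat.lt_or_ge d n with hlt | hge
    · exact absurd ((main (n - 1)).1 ⟨d, by omega, h2⟩) h'
    · obtain rfl : d = n := by omega
      exact h2
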